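/- Let L > 0 and let f : (−L, L) → ℝ be a measurable function with 0 ≤ sign(ξ)·f(ξ) ≤ 1 for a.e. ξ. Define h(ξ) = ∫_{−L}^{ξ} (𝓜f(ζ) − f(ζ)) dζ for ξ ∈ [−L, L]. Then h(ξ) ≥ 0 for every ξ ∈ [−L, L], and h(L) = 0. -/

import Mathlib

/-!
Write `u = ∫ f` and `g = 𝓜f - f`. The sign condition gives `g ≥ 0` a.e. on `ξ < u` and `g ≤ 0`
a.e. on `ξ > u`, whatever the sign of `u`. It also gives `|u| ≤ L`, so `M(u, ·)` has mass `u` on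
`(-L, L)` (`integral_Mfun`) and `∫ g = 0`, that is `h(L) = 0`. Hence `h` is the integral of a
nonnegative function for `ξ ≤ u`, and for `ξ ≥ u` it equals `-∫_ξ^L g ≥ 0`.
-/

open MeasureTheory Set Filter

/-- The Maxwellian `M(u, ξ)`: equals `1` on `0 < ξ < u`, `-1` on `u < ξ < 0`, `0` otherwise. -/
noncomputable def Mfun (u ξ : ℝ) : ℝ :=
  if 0 < ξ ∧ ξ < u then 1 else if u < ξ ∧ ξ < 0 then -1 else 0

/-- The projection `𝓜 f = M(u_f, ·)` with `u_f = ∫_{-L}^{L} f`. -/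
noncomputable def proj (L : ℝ) (f : ℝ → ℝ) (ξ : ℝ) : ℝ :=
  Mfun (∫ ζ in (-L)..L, f ζ) ξ

lemma Mfun_eq_indicator (u : ℝ) :
    Mfun u = fun ξ => (Ioo 0 u).indicator (fun _ => (1 : ℝ)) ξ
      - (Ioo u 0).indicator (fun _ => (1 : ℝ)) ξ := by
  funext ξ
  simp only [Mfun, indicator, mem_Ioo]
  split_ifs <;> grind

lemma integrable_Mfun (u : ℝ) : Integrable (Mfun u) := by
  rw [Mfun_eq_indicator]
  exact ((integrable_indicator_iff measurableSet_Ioo).2 (by simp)).sub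
    ((integrable_indicator_iff measurableSet_Ioo).2 (by simp))

/-- The Maxwellian `M(u, ·)` has mass `u` as soon as its support fits in `[-L, L]`. -/
lemma integral_Mfun {L u : ℝ} (h1 : -L ≤ u) (h2 : u ≤ L) :
    ∫ ξ in (-L)..L, Mfun u ξ = u := by
  have hL : -L ≤ L := h1.trans h2
  have e1 : Ioc (-L) L ∩ Ioo 0 u = Ioo 0 u :=
    inter_eq_right.2 fun x hx => ⟨by linarith [hx.1], by linarith [hx.2]⟩
  have e2 : Ioc (-L) L ∩ Ioo u 0 = Ioo u 0 :=
    inter_eq_right.2 fun x hx => ⟨by linarith [hx.1], by linarith [hx.2]⟩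
  rw [intervalIntegral.integral_of_le hL, Mfun_eq_indicator, integral_sub,
    setIntegral_indicator measurableSet_Ioo, setIntegral_indicator measurableSet_Ioo, e1, e2]
  · simp only [integral_const, smul_eq_mul, mul_one, measureReal_restrict_apply_univ,
      Real.volume_real_Ioo]
    rcases le_total 0 u with hu | hu
    · rw [max_eq_left (by linarith), max_eq_right (by linarith)]; ring
    · rw [max_eq_right (by linarith), max_eq_left (by linarith)]; ring
  · exact ((integrable_indicator_iff measurableSet_Ioo).2 (by simp)).integrableOn
  · exact ((integrable_indicator_iff measurableSet_Ioo).2 (by simp)).integrableOn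

theorem stmt3 (L : ℝ) (hL : 0 < L) (f : ℝ → ℝ) (hf : Measurable f)
    (hbd : ∀ᵐ ξ ∂(volume.restrict (Set.Ioo (-L) L)),
      0 ≤ Real.sign ξ * f ξ ∧ Real.sign ξ * f ξ ≤ 1)
    (h : ℝ → ℝ)
    (hh : ∀ ξ ∈ Set.Icc (-L) L, h ξ = ∫ ζ in (-L)..ξ, (proj L f ζ - f ζ)) :
    (∀ ξ ∈ Set.Icc (-L) L, 0 ≤ h ξ) ∧ h L = 0 := by
  -- The sign condition, unfolded away from the null set `{0, L}`.
  have hae : ∀ᵐ ξ ∂(volume : Measure ℝ), ξ ∈ Ioc (-L) L →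
      ξ ≠ 0 ∧ (ξ < 0 → -1 ≤ f ξ ∧ f ξ ≤ 0) ∧ (0 < ξ → 0 ≤ f ξ ∧ f ξ ≤ 1) := by
    rw [ae_restrict_iff' measurableSet_Ioo] at hbd
    filter_upwards [hbd, Measure.ae_ne volume (0 : ℝ), Measure.ae_ne volume L]
      with ξ h1 h0 hne hm
    have h2 := h1 ⟨hm.1, lt_of_le_of_ne hm.2 hne⟩
    refine ⟨h0, fun hneg => ?_, fun hpos => ?_⟩
    · rw [Real.sign_of_neg hneg] at h2
      constructor <;> linarith [h2.1, h2.2]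
    · rw [Real.sign_of_pos hpos] at h2
      constructor <;> linarith [h2.1, h2.2]
  have hLL : -L ≤ L := by linarith
  have hfi : IntervalIntegrable f volume (-L) L := by
    rw [intervalIntegrable_iff_integrableOn_Ioc_of_le hLL]
    refine Measure.integrableOn_of_bounded (M := 1) (by simp) hf.aestronglyMeasurable ?_
    rw [ae_restrict_iff' measurableSet_Ioc]
    filter_upwards [hae] with ξ hξ hm
    obtain ⟨h0, hn, hp⟩ := hξ hm
    rw [Real.norm_eq_abs, abs_le]
    rcases lt_or_gt_of_ne h0 with h | h
    · exact ⟨(hn h).1, by linarith [(hn h).2]⟩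
    · exact ⟨by linarith [(hp h).1], (hp h).2⟩
  have hsub : ∀ {k : ℝ → ℝ}, IntervalIntegrable k volume (-L) L → ∀ {a b : ℝ}, -L ≤ a → a ≤ b →
      b ≤ L → IntervalIntegrable k volume a b := fun hk a b ha hab hb =>
    hk.mono_set (by
      rw [uIcc_of_le hab, uIcc_of_le hLL]
      exact Icc_subset_Icc ha hb)
  -- A.e. comparison on a subinterval.
  have hcmp : ∀ {k l : ℝ → ℝ} {a b : ℝ}, IntervalIntegrable k volume (-L) L →
      IntervalIntegrable l volume (-L) L → -L ≤ a → a ≤ b → b ≤ L →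
      (∀ᵐ ξ ∂(volume : Measure ℝ), ξ ∈ Ioo a b → k ξ ≤ l ξ) →
      ∫ ξ in a..b, k ξ ≤ ∫ ξ in a..b, l ξ := by
    intro k l a b hk hl ha hab hb hkl
    refine intervalIntegral.integral_mono_ae_restrict hab (hsub hk ha hab hb)
      (hsub hl ha hab hb) ?_
    rw [EventuallyLE, ae_restrict_iff' measurableSet_Icc]
    filter_upwards [hkl, Measure.ae_ne volume a, Measure.ae_ne volume b] with ξ h1 h2 h3 hm
    exact h1 ⟨lt_of_le_of_ne hm.1 h2.symm, lt_of_le_of_ne hm.2 h3⟩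
  set u := ∫ ζ in (-L)..L, f ζ with hu
  have hsplit : u = (∫ ζ in (-L)..0, f ζ) + ∫ ζ in (0:ℝ)..L, f ζ :=
    (intervalIntegral.integral_add_adjacent_intervals
      (hsub hfi le_rfl (by linarith) hL.le) (hsub hfi (by linarith) hL.le le_rfl)).symm
  have hn : ∀ᵐ ξ ∂(volume : Measure ℝ), ξ ∈ Ioo (-L) 0 → -1 ≤ f ξ ∧ f ξ ≤ 0 := by
    filter_upwards [hae] with ξ hξ hm
    exact (hξ ⟨hm.1, by linarith [hm.2]⟩).2.1 hm.2
  have hp : ∀ᵐ ξ ∂(volume : Measure ℝ), ξ ∈ Ioo 0 L → 0 ≤ f ξ ∧ f ξ ≤ 1 := by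
    filter_upwards [hae] with ξ hξ hm
    exact (hξ ⟨by linarith [hm.1], hm.2.le⟩).2.2 hm.1
  have b1 := hcmp hfi (intervalIntegrable_const (c := (0:ℝ))) le_rfl (by linarith) hL.le
    (hn.mono fun ξ h hm => (h hm).2)
  have b2 := hcmp (intervalIntegrable_const (c := (-1:ℝ))) hfi le_rfl (by linarith) hL.le
    (hn.mono fun ξ h hm => (h hm).1)
  have b3 := hcmp hfi (intervalIntegrable_const (c := (1:ℝ))) (by linarith) hL.le le_rfl
    (hp.mono fun ξ h hm => (h hm).2)
  have b4 := hcmp (intervalIntegrable_const (c := (0:ℝ))) hfi (by linarith) hL.le le_rfl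
    (hp.mono fun ξ h hm => (h hm).1)
  simp only [intervalIntegral.integral_const, smul_eq_mul] at b1 b2 b3 b4
  have hMi : IntervalIntegrable (proj L f) volume (-L) L :=
    (integrable_Mfun u).intervalIntegrable
  have hgi : IntervalIntegrable (fun ζ => proj L f ζ - f ζ) volume (-L) L := hMi.sub hfi
  have htot : ∫ ζ in (-L)..L, (proj L f ζ - f ζ) = 0 := by
    rw [intervalIntegral.integral_sub hMi hfi]
    have : ∫ ζ in (-L)..L, proj L f ζ = u := integral_Mfun (by linarith) (by linarith)
    rw [this, ← hu, sub_self]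
  refine ⟨fun ξ hξ => ?_, by rw [hh L ⟨hLL, le_rfl⟩, htot]⟩
  rw [hh ξ hξ]
  rcases le_total ξ u with hle | hle
  · have := hcmp (intervalIntegrable_const (c := (0:ℝ))) hgi le_rfl hξ.1 hξ.2 (by
      filter_upwards [hae] with x hx hm
      obtain ⟨h0, hxn, hxp⟩ := hx ⟨hm.1, by linarith [hm.2, hξ.2]⟩
      have hxu : x < u := hm.2.trans_le hle
      change 0 ≤ Mfun u x - f x
      rcases lt_or_gt_of_ne h0 with hx0 | hx0
      · rw [Mfun, if_neg (by rintro ⟨h, -⟩; linarith), if_neg (by rintro ⟨h, -⟩; linarith)]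
        linarith [(hxn hx0).2]
      · rw [Mfun, if_pos ⟨hx0, hxu⟩]
        linarith [(hxp hx0).2])
    simpa using this
  · have hneg := hcmp hgi (intervalIntegrable_const (c := (0:ℝ))) hξ.1 hξ.2 le_rfl (by
      filter_upwards [hae] with x hx hm
      obtain ⟨h0, hxn, hxp⟩ := hx ⟨by linarith [hm.1, hξ.1], hm.2.le⟩
      have hxu : u < x := hle.trans_lt hm.1
      change Mfun u x - f x ≤ 0
      rcases lt_or_gt_of_ne h0 with hx0 | hx0
      · rw [Mfun, if_neg (by rintro ⟨h, -⟩; linarith), if_pos ⟨hxu, hx0⟩]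
        linarith [(hxn hx0).1]
      · rw [Mfun, if_neg (by rintro ⟨-, h⟩; linarith), if_neg (by rintro ⟨-, h⟩; linarith)]
        linarith [(hxp hx0).1])
    have hadd := intervalIntegral.integral_add_adjacent_intervals
      (hsub hgi le_rfl hξ.1 hξ.2) (hsub hgi hξ.1 hξ.2 le_rfl)
    simp only [intervalIntegral.integral_zero] at hneg
    linarith
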